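/- arXiv:2602.04623 — 2 statements merged into one kernel-verified Lean document; each statement's English description precedes it below -/
import Mathlib

section
/- Let H be an M-by-N complex matrix, Y an M-by-L complex matrix, z ∈ ℝ^N, and β ∈ ℝ. Let Σ = e^β I_M + H diag(e^{z}) H^*, and for an N-by-L complex matrix Θ define F(Θ) = e^{-β} ‖Y − H Θ‖_F^2 + tr(Θ^* diag(e^{-z}) Θ). Then F(Θ) = tr(Y^* Σ^{-1} Y) holds if and only if Θ = Θ* := e^{-β} (e^{-β} H^* H + diag(e^{-z}))^{-1} H^* Y; that is, Θ* is the unique minimizer of F over ℂ^{N×L}, with minimum value tr(Y^* Σ^{-1} Y). -/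
open Matrix

/-!
Let `R` and `P` be positive definite, `Σ = R + H P Hᴴ` and `A = Hᴴ R⁻¹ H + P⁻¹`. By the Woodbury
identity, `Σ⁻¹ = R⁻¹ - R⁻¹ H A⁻¹ Hᴴ R⁻¹`. Completing the square in `Θ` therefore gives, as an
identity of matrices,
`(Y - HΘ)ᴴ R⁻¹ (Y - HΘ) + Θᴴ P⁻¹ Θ = (Θ - Θ*)ᴴ A (Θ - Θ*) + Yᴴ Σ⁻¹ Y` with
`Θ* = A⁻¹ Hᴴ R⁻¹ Y`. Since `A` is positive definite, the trace of the square vanishes only at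
`Θ = Θ*`. The theorem is the case `R = e^β I`, `P = diag(e^z)`.
-/

section CompleteSquare

variable {m n l α : Type*} [Fintype n] [DecidableEq n] [CommRing α] [StarRing α]

lemma conjTranspose_mul_mul_sub_linear_eq_completeSquare {A : Matrix n n α}
    (hA : A.IsHermitian) (hAu : IsUnit A) (B X : Matrix n l α) :
    Xᴴ * A * X - Xᴴ * B - Bᴴ * X =
      (X - A⁻¹ * B)ᴴ * A * (X - A⁻¹ * B) - Bᴴ * A⁻¹ * B := by
  have hdet : IsUnit A.det := (isUnit_iff_isUnit_det A).mp hAu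
  have hcenter : A * (A⁻¹ * B) = B := mul_nonsing_inv_cancel_left A B hdet
  have hcenter_star : (A⁻¹ * B)ᴴ * A = Bᴴ := by
    rw [conjTranspose_mul, hA.inv.eq, nonsing_inv_mul_cancel_right A Bᴴ hdet]
  rw [conjTranspose_sub, Matrix.sub_mul, hcenter_star]
  simp only [Matrix.mul_sub, Matrix.sub_mul, Matrix.mul_assoc, hcenter]
  abel

variable [Fintype m]

lemma weighted_residual_add_penalty_eq_completeSquare {W : Matrix m m α} {Q : Matrix n n α}
    (hW : W.IsHermitian) (hQ : Q.IsHermitian) (H : Matrix m n α)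
    (hA : IsUnit (Hᴴ * W * H + Q)) (Y : Matrix m l α) (Θ : Matrix n l α) :
    (Y - H * Θ)ᴴ * W * (Y - H * Θ) + Θᴴ * Q * Θ =
      (Θ - (Hᴴ * W * H + Q)⁻¹ * (Hᴴ * W * Y))ᴴ * (Hᴴ * W * H + Q) *
          (Θ - (Hᴴ * W * H + Q)⁻¹ * (Hᴴ * W * Y)) +
        Yᴴ * (W - W * H * (Hᴴ * W * H + Q)⁻¹ * Hᴴ * W) * Y := by
  have hAh : (Hᴴ * W * H + Q).IsHermitian := (isHermitian_conjTranspose_mul_mul H hW).add hQ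
  have hBstar : (Hᴴ * W * Y)ᴴ = Yᴴ * W * H := by
    simp only [conjTranspose_mul, conjTranspose_conjTranspose, hW.eq, Matrix.mul_assoc]
  have hsquare :=
    conjTranspose_mul_mul_sub_linear_eq_completeSquare hAh hA (Hᴴ * W * Y) Θ
  calc (Y - H * Θ)ᴴ * W * (Y - H * Θ) + Θᴴ * Q * Θ
      = (Θᴴ * (Hᴴ * W * H + Q) * Θ - Θᴴ * (Hᴴ * W * Y) - (Hᴴ * W * Y)ᴴ * Θ) +
          Yᴴ * W * Y := by
        rw [hBstar]
        simp only [conjTranspose_sub, conjTranspose_mul, Matrix.mul_sub, Matrix.sub_mul,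
          Matrix.mul_add, Matrix.add_mul, Matrix.mul_assoc]
        abel
    _ = _ := by
        rw [hsquare, hBstar]
        simp only [Matrix.mul_sub, Matrix.sub_mul, Matrix.mul_assoc]
        abel

lemma regularized_residual_eq_completeSquare [DecidableEq m] {R : Matrix m m α}
    {P : Matrix n n α} (hR : R.IsHermitian) (hP : P.IsHermitian) (hRu : IsUnit R)
    (hPu : IsUnit P) (H : Matrix m n α) (hA : IsUnit (Hᴴ * R⁻¹ * H + P⁻¹))
    (Y : Matrix m l α) (Θ : Matrix n l α) :
    (Y - H * Θ)ᴴ * R⁻¹ * (Y - H * Θ) + Θᴴ * P⁻¹ * Θ =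
      (Θ - (Hᴴ * R⁻¹ * H + P⁻¹)⁻¹ * (Hᴴ * R⁻¹ * Y))ᴴ * (Hᴴ * R⁻¹ * H + P⁻¹) *
          (Θ - (Hᴴ * R⁻¹ * H + P⁻¹)⁻¹ * (Hᴴ * R⁻¹ * Y)) +
        Yᴴ * (R + H * P * Hᴴ)⁻¹ * Y := by
  rw [add_mul_mul_inv_eq_sub R H P Hᴴ hRu hPu (by rwa [add_comm]), add_comm P⁻¹]
  exact weighted_residual_add_penalty_eq_completeSquare hR.inv hP.inv H hA Y Θ

end CompleteSquare

section TraceForm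

open scoped ComplexOrder

variable {m n l 𝕜 : Type*} [Fintype m] [Fintype n] [Fintype l] [RCLike 𝕜]

lemma re_trace_conjTranspose_mul_mul_eq_zero_iff {A : Matrix n n 𝕜} (hA : A.PosDef)
    (X : Matrix n l 𝕜) : RCLike.re (Xᴴ * A * X).trace = 0 ↔ X = 0 := by
  have hcol (j : l) : (Xᴴ * A * X) j j = star (X.col j) ⬝ᵥ A *ᵥ X.col j := by
    rw [Matrix.mul_assoc]
    rfl
  have hterm_nonneg (j : l) : 0 ≤ RCLike.re (star (X.col j) ⬝ᵥ A *ᵥ X.col j) :=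
    hA.posSemidef.re_dotProduct_nonneg _
  refine ⟨fun htrace => ?_, fun hX => by simp [hX]⟩
  simp only [trace, diag_apply, hcol, map_sum] at htrace
  have hterm := (Finset.sum_eq_zero_iff_of_nonneg fun j _ => hterm_nonneg j).mp htrace
  ext i j
  have hcol_zero : X.col j = 0 := by
    by_contra hne
    exact (hA.re_dotProduct_pos hne).ne' (hterm j (Finset.mem_univ j))
  exact congrFun hcol_zero i

variable [DecidableEq m] [DecidableEq n]

theorem trace_inv_quadratic_upper_bound_eq_iff_general {R : Matrix m m 𝕜} {P : Matrix n n 𝕜}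
    (hR : R.PosDef) (hP : P.PosDef) (H : Matrix m n 𝕜) (Y : Matrix m l 𝕜) (Θ : Matrix n l 𝕜) :
    RCLike.re ((Y - H * Θ)ᴴ * R⁻¹ * (Y - H * Θ)).trace + RCLike.re (Θᴴ * P⁻¹ * Θ).trace =
        RCLike.re (Yᴴ * (R + H * P * Hᴴ)⁻¹ * Y).trace ↔
      Θ = (Hᴴ * R⁻¹ * H + P⁻¹)⁻¹ * (Hᴴ * R⁻¹ * Y) := by
  have hA : (Hᴴ * R⁻¹ * H + P⁻¹).PosDef :=
    PosDef.posSemidef_add (hR.inv.posSemidef.conjTranspose_mul_mul_same H) hP.inv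
  rw [← map_add, ← trace_add, regularized_residual_eq_completeSquare hR.isHermitian
    hP.isHermitian hR.isUnit hP.isUnit H hA.isUnit Y Θ, trace_add, map_add, add_eq_right,
    re_trace_conjTranspose_mul_mul_eq_zero_iff hA, sub_eq_zero]

end TraceForm

section ExponentialDiagonal

variable {n 𝕜 : Type*} [DecidableEq n] [RCLike 𝕜]

open scoped ComplexOrder in
lemma posDef_diagonal_exp (z : n → ℝ) : (diagonal fun i => (Real.exp (z i) : 𝕜)).PosDef :=
  PosDef.diagonal fun i => RCLike.ofReal_pos.mpr (Real.exp_pos (z i))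

lemma inv_diagonal_exp [Fintype n] (z : n → ℝ) :
    (diagonal fun i => (Real.exp (z i) : 𝕜))⁻¹ = diagonal fun i => (Real.exp (-z i) : 𝕜) := by
  refine inv_eq_left_inv ?_
  simp only [diagonal_mul_diagonal, ← RCLike.ofReal_mul, ← Real.exp_add, neg_add_cancel,
    Real.exp_zero, RCLike.ofReal_one, diagonal_one]

end ExponentialDiagonal

/-- **Uniqueness of the equality case of the majorization inequality (4).**
With `Σ = e^β I + H diag(e^z) Hᴴ` and
`F(Θ) = e^{-β} ‖Y − HΘ‖_F² + tr(Θᴴ diag(e^{-z}) Θ)`, equality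
`F(Θ) = tr(Yᴴ Σ⁻¹ Y)` holds iff `Θ = Θ* = e^{-β}(e^{-β} Hᴴ H + diag(e^{-z}))⁻¹ Hᴴ Y`;
i.e. `Θ*` is the unique minimizer of `F`, with minimum value `tr(Yᴴ Σ⁻¹ Y)`. -/
theorem trace_inv_quadratic_upper_bound_eq_iff (M N L : ℕ)
    (H : Matrix (Fin M) (Fin N) ℂ) (Y : Matrix (Fin M) (Fin L) ℂ)
    (z : Fin N → ℝ) (β : ℝ) (Θ : Matrix (Fin N) (Fin L) ℂ) :
    (Real.exp (-β) * (Matrix.trace ((Y - H * Θ)ᴴ * (Y - H * Θ))).re +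
        (Matrix.trace (Θᴴ * Matrix.diagonal (fun n => (Real.exp (-(z n)) : ℂ)) * Θ)).re =
      (Matrix.trace (Yᴴ *
        ((Real.exp β : ℂ) • (1 : Matrix (Fin M) (Fin M) ℂ) +
          H * Matrix.diagonal (fun n => (Real.exp (z n) : ℂ)) * Hᴴ)⁻¹ * Y)).re) ↔
    Θ = (Real.exp (-β) : ℂ) •
        (((Real.exp (-β) : ℂ) • (Hᴴ * H) +
          Matrix.diagonal (fun n => (Real.exp (-(z n)) : ℂ)))⁻¹ * (Hᴴ * Y)) := by
  have h := trace_inv_quadratic_upper_bound_eq_iff_general (𝕜 := ℂ)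
    (posDef_diagonal_exp fun _ => β) (posDef_diagonal_exp z) H Y Θ
  rw [inv_diagonal_exp, inv_diagonal_exp] at h
  simpa only [← smul_one_eq_diagonal, Matrix.mul_smul, Matrix.smul_mul, Matrix.mul_one,
    Matrix.mul_assoc, trace_smul, smul_eq_mul, RCLike.ofReal_eq_complex_ofReal,
    RCLike.re_eq_complex_re, Complex.re_ofReal_mul] using h
end

section
/- Let H be an M-by-N complex matrix, L a positive integer, c ≥ 0 a real number, w ∈ ℝ^N a vector with nonnegative entries, τ ≥ 0, and a₀, b₀ > 0. The function on ℝ^N × ℝ given by (z, β) ↦ L·log det(e^β I_M + H diag(e^{z}) H^*) + c·e^{-β} + ∑_{n=1}^N w_n e^{-z_n} + ∑_{n=1}^N ((a₀+1) z_n + b₀ e^{-z_n}) + (a₀+1) β + b₀ e^{-β} + τ ‖D z‖₁ is convex on ℝ^{N+1}. -/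
open Matrix

/-- `‖D z‖₁ = ∑_{n=2}^N |z_n − z_{n-1}|`, the total variation of `z ∈ ℝ^N`,
where `D` is the `(N−1) × N` first-order difference matrix. -/
noncomputable def tvNorm {N : ℕ} (z : Fin N → ℝ) : ℝ :=
  ∑ i : Fin (N - 1),
    |z ⟨i.val + 1, by have := i.isLt; omega⟩ - z ⟨i.val, by have := i.isLt; omega⟩|

/-!
For `A = [H I]` the matrix `e^β I + H diag(e^z) Hᴴ` equals `A diag(e^x) Aᴴ` with
`x = (z, β, …, β)`. By Cauchy-Binet its determinant is a combination of exponentials of linear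
forms in `x`, whose coefficients are squared moduli of minors of `A`. They are nonnegative and the
minor of the block `I` is `1`, so Hölder's inequality makes the logarithm of this combination
convex. All other terms of the surrogate are visibly convex.
-/

section CauchyBinet

variable {m ι R : Type*} [Fintype m] [DecidableEq m] [Fintype ι] [CommRing R]

theorem det_mul_eq_sum_prod_mul_det (A : Matrix m ι R) (B : Matrix ι m R) :
    (A * B).det = ∑ f : m → ι, (∏ i, A i (f i)) * (B.submatrix f id).det := by
  let D : MultilinearMap R (fun _ : m => m → R) R := detRowAlternating.toMultilinearMap
  calc (A * B).det = D fun i => ∑ k, A i k • B k := by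
        congr 1
        ext i j
        simp [mul_apply]
    _ = ∑ f : m → ι, D fun i => A i (f i) • B (f i) := D.map_sum _
    _ = ∑ f : m → ι, (∏ i, A i (f i)) * (B.submatrix f id).det :=
        Finset.sum_congr rfl fun f _ => D.map_smul_univ _ _

-- Summing over all `f`, rather than over the subsets of `ι` of size `card m`, avoids ordering `ι`;
-- each subset is then counted `(card m)!` times.
theorem factorial_mul_det_mul_eq_sum_det_mul_det (A : Matrix m ι R) (B : Matrix ι m R) :
    ((Fintype.card m).factorial : R) * (A * B).det =
      ∑ f : m → ι, (A.submatrix id f).det * (B.submatrix f id).det := by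
  have permuted (σ : Equiv.Perm m) : (A * B).det =
      ∑ f : m → ι,
        ((σ.sign : ℤ) : R) * (∏ i, A i (f (σ i))) * (B.submatrix f id).det := by
    rw [det_mul_eq_sum_prod_mul_det, ← (σ.symm.arrowCongr (Equiv.refl ι)).sum_comp]
    refine Finset.sum_congr rfl fun f _ => ?_
    have det_permuted : (B.submatrix (f ∘ σ) id).det =
        ((σ.sign : ℤ) : R) * (B.submatrix f id).det := det_permute σ (B.submatrix f id)
    change (∏ i, A i (f (σ i))) * (B.submatrix (f ∘ σ) id).det = _
    rw [det_permuted]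
    ring
  have det_submatrix (f : m → ι) : (A.submatrix id f).det =
      ∑ σ : Equiv.Perm m, ((σ.sign : ℤ) : R) * ∏ i, A i (f (σ i)) := by
    rw [← det_transpose, det_apply']
    rfl
  calc ((Fintype.card m).factorial : R) * (A * B).det = ∑ _σ : Equiv.Perm m, (A * B).det := by
        simp [Fintype.card_perm]
    _ = ∑ f : m → ι, ∑ σ : Equiv.Perm m,
          ((σ.sign : ℤ) : R) * (∏ i, A i (f (σ i))) * (B.submatrix f id).det := by
        rw [Finset.sum_comm]
        exact Finset.sum_congr rfl fun σ _ => permuted σ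
    _ = ∑ f : m → ι, (A.submatrix id f).det * (B.submatrix f id).det := by
        simp_rw [← Finset.sum_mul, ← det_submatrix]

end CauchyBinet

theorem det_mul_diagonal_mul_conjTranspose {m ι 𝕜 : Type*} [Fintype m]
    [DecidableEq m] [Fintype ι] [DecidableEq ι] [RCLike 𝕜] (A : Matrix m ι 𝕜) (d : ι → ℝ) :
    (A * diagonal (fun k => (d k : 𝕜)) * Aᴴ).det =
      ((∑ f : m → ι, ‖(A.submatrix id f).det‖ ^ 2 / (Fintype.card m).factorial *
        ∏ i, d (f i) : ℝ) : 𝕜) := by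
  have hfact : ((Fintype.card m).factorial : 𝕜) ≠ 0 := by
    exact_mod_cast (Fintype.card m).factorial_ne_zero
  have minor (f : m → ι) : ((diagonal (fun k => (d k : 𝕜)) * Aᴴ).submatrix f id).det =
      (∏ i, (d (f i) : 𝕜)) * star (A.submatrix id f).det := by
    rw [← det_conjTranspose, ← det_mul_column]
    congr 1
    ext i j
    simp
  rw [← mul_right_inj' hfact, Matrix.mul_assoc, factorial_mul_det_mul_eq_sum_det_mul_det]
  push_cast
  rw [Finset.mul_sum]
  refine Finset.sum_congr rfl fun f _ => ?_
  rw [minor, ← RCLike.mul_conj, starRingEnd_apply]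
  field_simp

theorem fromCols_one_mul_diagonal_mul_conjTranspose {m n R : Type*} [Fintype m] [DecidableEq m]
    [Fintype n] [DecidableEq n] [Semiring R] [StarRing R] (H : Matrix m n R) (d : n → R) (s : R) :
    fromCols H (1 : Matrix m m R) * diagonal (Sum.elim d (Function.const m s)) *
      (fromCols H (1 : Matrix m m R))ᴴ = s • (1 : Matrix m m R) + H * diagonal d * Hᴴ := by
  rw [conjTranspose_fromCols_eq_fromRows_conjTranspose, ← fromBlocks_diagonal,
    fromCols_mul_fromBlocks, fromCols_mul_fromRows, add_comm]
  simp [Function.const_def, smul_one_eq_diagonal]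

theorem convexOn_log_sum_mul_exp {ι : Type*} [Fintype ι] {c : ι → ℝ} (hc : ∀ i, 0 ≤ c i)
    (hpos : ∃ i, 0 < c i) :
    ConvexOn ℝ Set.univ (fun x : ι → ℝ => Real.log (∑ i, c i * Real.exp (x i))) := by
  have term_nonneg (x : ι → ℝ) (i : ι) : 0 ≤ c i * Real.exp (x i) :=
    mul_nonneg (hc i) (Real.exp_nonneg _)
  have sum_pos (x : ι → ℝ) : 0 < ∑ i, c i * Real.exp (x i) := by
    obtain ⟨i, hi⟩ := hpos
    exact Finset.sum_pos' (fun j _ => term_nonneg x j)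
      ⟨i, Finset.mem_univ i, mul_pos hi (Real.exp_pos _)⟩
  refine convexOn_iff_forall_pos.2 ⟨convex_univ, fun x _ y _ a b ha hb hab => ?_⟩
  have term_eq (i : ι) : c i * Real.exp (a * x i + b * y i) =
      (c i * Real.exp (x i)) ^ a * (c i * Real.exp (y i)) ^ b := by
    rw [Real.mul_rpow (hc i) (Real.exp_nonneg _), Real.mul_rpow (hc i) (Real.exp_nonneg _),
      ← Real.exp_mul, ← Real.exp_mul, mul_mul_mul_comm, ← Real.exp_add,
      ← Real.rpow_add_of_nonneg (hc i) ha.le hb.le, hab, Real.rpow_one, mul_comm (x i),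
      mul_comm (y i)]
  have hoelder : ∑ i, c i * Real.exp (a * x i + b * y i) ≤
      (∑ i, c i * Real.exp (x i)) ^ a * (∑ i, c i * Real.exp (y i)) ^ b := by
    have h := Real.inner_le_Lp_mul_Lq_of_nonneg Finset.univ
      (Real.HolderConjugate.inv_inv ha hb hab)
      (fun i _ => Real.rpow_nonneg (term_nonneg x i) a)
      (fun i _ => Real.rpow_nonneg (term_nonneg y i) b)
    simpa only [← term_eq, Real.rpow_rpow_inv (term_nonneg _ _) ha.ne',
      Real.rpow_rpow_inv (term_nonneg _ _) hb.ne', one_div, inv_inv] using h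
  calc Real.log (∑ i, c i * Real.exp (a * x i + b * y i))
      ≤ Real.log ((∑ i, c i * Real.exp (x i)) ^ a * (∑ i, c i * Real.exp (y i)) ^ b) :=
        Real.log_le_log (sum_pos (a • x + b • y)) hoelder
    _ = a * Real.log (∑ i, c i * Real.exp (x i)) + b * Real.log (∑ i, c i * Real.exp (y i)) := by
        rw [Real.log_mul (Real.rpow_pos_of_pos (sum_pos x) a).ne'
          (Real.rpow_pos_of_pos (sum_pos y) b).ne', Real.log_rpow (sum_pos x),
          Real.log_rpow (sum_pos y)]

section LogDet

variable {m n ι 𝕜 : Type*} [Fintype m] [DecidableEq m] [Fintype n] [DecidableEq n]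
  [Fintype ι] [DecidableEq ι] [RCLike 𝕜]

theorem convexOn_log_det_mul_diagonal_exp_mul_conjTranspose {A : Matrix m ι 𝕜}
    (hA : ∃ f : m → ι, (A.submatrix id f).det ≠ 0) :
    ConvexOn ℝ Set.univ (fun x : ι → ℝ =>
      Real.log (RCLike.re (A * diagonal (fun k => (Real.exp (x k) : 𝕜)) * Aᴴ).det)) := by
  simp_rw [det_mul_diagonal_mul_conjTranspose, RCLike.ofReal_re, ← Real.exp_sum]
  let exponents : (ι → ℝ) →ₗ[ℝ] (m → ι) → ℝ :=
    LinearMap.pi fun f => ∑ i, LinearMap.proj (f i)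
  have hlse := convexOn_log_sum_mul_exp
    (c := fun f : m → ι => ‖(A.submatrix id f).det‖ ^ 2 / (Fintype.card m).factorial)
    (fun f => by positivity) (hA.imp fun f hf => by positivity)
  simpa [exponents, Function.comp_def] using hlse.comp_linearMap exponents

theorem convexOn_log_det_exp_smul_one_add (H : Matrix m n 𝕜) :
    ConvexOn ℝ Set.univ (fun p : (n → ℝ) × ℝ =>
      Real.log (RCLike.re ((Real.exp p.2 : 𝕜) • (1 : Matrix m m 𝕜) +
        H * diagonal (fun k => (Real.exp (p.1 k) : 𝕜)) * Hᴴ).det)) := by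
  let A : Matrix m (n ⊕ m) 𝕜 := fromCols H 1
  have hA : (A.submatrix id Sum.inr).det ≠ 0 := by
    have : A.submatrix id Sum.inr = 1 := rfl
    simp [this]
  let logWeights : (n → ℝ) × ℝ →ₗ[ℝ] n ⊕ m → ℝ :=
    LinearMap.pi (Sum.elim (fun k => LinearMap.proj k ∘ₗ LinearMap.fst ℝ _ _)
      fun _ => LinearMap.snd ℝ _ _)
  have diagonal_eq (p : (n → ℝ) × ℝ) : (fun k => (Real.exp (logWeights p k) : 𝕜)) =
      Sum.elim (fun k => (Real.exp (p.1 k) : 𝕜)) (Function.const m (Real.exp p.2 : 𝕜)) := by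
    ext (k | k) <;> rfl
  have h := (convexOn_log_det_mul_diagonal_exp_mul_conjTranspose ⟨_, hA⟩).comp_linearMap logWeights
  simpa only [A, Function.comp_def, Set.preimage_univ, diagonal_eq,
    fromCols_one_mul_diagonal_mul_conjTranspose] using h

end LogDet

theorem convexOn_finsetSum {ι R E F : Type*} [Semiring R] [PartialOrder R] [AddCommMonoid E]
    [SMul R E] [AddCommMonoid F] [PartialOrder F] [IsOrderedAddMonoid F] [DistribSMul R F]
    {s : Set E} (hs : Convex R s) (t : Finset ι) {g : ι → E → F}
    (hg : ∀ i ∈ t, ConvexOn R s (g i)) : ConvexOn R s (fun x => ∑ i ∈ t, g i x) := by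
  refine ⟨hs, fun x hx y hy a b ha hb hab => ?_⟩
  simp_rw [Finset.smul_sum, ← Finset.sum_add_distrib]
  exact Finset.sum_le_sum fun i hi => (hg i hi).2 hx hy ha hb hab

theorem convexOn_exp_neg_linearMap {E : Type*} [AddCommMonoid E] [Module ℝ E] (l : E →ₗ[ℝ] ℝ) :
    ConvexOn ℝ Set.univ (fun x => Real.exp (-l x)) :=
  convexOn_exp.comp_linearMap (-l)

theorem convexOn_tvNorm (N : ℕ) : ConvexOn ℝ Set.univ (tvNorm (N := N)) := by
  refine convexOn_finsetSum convex_univ Finset.univ fun i _ => ?_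
  let coord (k : Fin N) : (Fin N → ℝ) →ₗ[ℝ] ℝ := LinearMap.proj k
  have convexOn_abs : ConvexOn ℝ Set.univ (fun x : ℝ => |x|) := convexOn_univ_norm
  exact convexOn_abs.comp_linearMap (coord ⟨i.val + 1, by lia⟩ - coord ⟨i.val, by lia⟩)

theorem surrogate_convex_general {m 𝕜 : Type*} [Fintype m] [DecidableEq m] [RCLike 𝕜] {N : ℕ}
    (H : Matrix m (Fin N) 𝕜) {L c : ℝ} (hL : 0 ≤ L) (hc : 0 ≤ c) {w : Fin N → ℝ}
    (hw : ∀ n, 0 ≤ w n) {τ : ℝ} (hτ : 0 ≤ τ) (a0 : ℝ) {b0 : ℝ} (hb0 : 0 ≤ b0) :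
    ConvexOn ℝ Set.univ (fun p : (Fin N → ℝ) × ℝ =>
      L * Real.log (RCLike.re ((Real.exp p.2 : 𝕜) • (1 : Matrix m m 𝕜) +
          H * diagonal (fun n => (Real.exp (p.1 n) : 𝕜)) * Hᴴ).det) +
        c * Real.exp (-p.2) + (∑ n, w n * Real.exp (-(p.1 n))) +
        (∑ n, ((a0 + 1) * p.1 n + b0 * Real.exp (-(p.1 n)))) +
        (a0 + 1) * p.2 + b0 * Real.exp (-p.2) + τ * tvNorm p.1) := by
  let β : (Fin N → ℝ) × ℝ →ₗ[ℝ] ℝ := LinearMap.snd ℝ _ _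
  let z (n : Fin N) : (Fin N → ℝ) × ℝ →ₗ[ℝ] ℝ := LinearMap.proj n ∘ₗ LinearMap.fst ℝ _ _
  have linear (l : (Fin N → ℝ) × ℝ →ₗ[ℝ] ℝ) : ConvexOn ℝ Set.univ fun p => (a0 + 1) * l p :=
    ((a0 + 1) • l).convexOn convex_univ
  have logDet := (convexOn_log_det_exp_smul_one_add H).smul hL
  have residual := (convexOn_exp_neg_linearMap β).smul hc
  have rowNorms := convexOn_finsetSum convex_univ Finset.univ fun n _ =>
    (convexOn_exp_neg_linearMap (z n)).smul (hw n)
  have priorZ := convexOn_finsetSum convex_univ Finset.univ fun n _ =>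
    (linear (z n)).add ((convexOn_exp_neg_linearMap (z n)).smul hb0)
  have priorβ := (convexOn_exp_neg_linearMap β).smul hb0
  have totalVariation := ((convexOn_tvNorm N).comp_linearMap (LinearMap.fst ℝ _ ℝ)).smul hτ
  exact (((((logDet.add residual).add rowNorms).add priorZ).add (linear β)).add priorβ).add
    totalVariation

/-- **Convexity of the MM surrogate (6).** For `c ≥ 0`, nonnegative weights `w`,
`τ ≥ 0` and `a₀, b₀ > 0`, the function
`(z, β) ↦ L log det(e^β I + H diag(e^z) Hᴴ) + c e^{-β} + ∑ₙ wₙ e^{-zₙ}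
  + ∑ₙ ((a₀+1) zₙ + b₀ e^{-zₙ}) + (a₀+1) β + b₀ e^{-β} + τ ‖D z‖₁`
is convex on `ℝ^N × ℝ`. -/
theorem surrogate_convex (M N L : ℕ) (hL : 0 < L)
    (H : Matrix (Fin M) (Fin N) ℂ)
    (c : ℝ) (hc : 0 ≤ c) (w : Fin N → ℝ) (hw : ∀ n, 0 ≤ w n)
    (τ : ℝ) (hτ : 0 ≤ τ) (a0 b0 : ℝ) (ha0 : 0 < a0) (hb0 : 0 < b0) :
    ConvexOn ℝ Set.univ (fun p : (Fin N → ℝ) × ℝ =>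
      L * Real.log (((Real.exp p.2 : ℂ) • (1 : Matrix (Fin M) (Fin M) ℂ) +
          H * Matrix.diagonal (fun n => (Real.exp (p.1 n) : ℂ)) * Hᴴ).det.re) +
        c * Real.exp (-p.2) + (∑ n, w n * Real.exp (-(p.1 n))) +
        (∑ n, ((a0 + 1) * p.1 n + b0 * Real.exp (-(p.1 n)))) +
        (a0 + 1) * p.2 + b0 * Real.exp (-p.2) + τ * tvNorm p.1) :=
  surrogate_convex_general H L.cast_nonneg hc hw hτ a0 hb0.le
end
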